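/- There exist universal constants C, c > 0 such that the following holds. Let k, h, t, d, s be positive integers with 1 ≤ s ≤ k and k·h·t ≥ 3·s, let α ∈ (0,1), and let V₁, …, V_N be linear subspaces of ℝ^n, each of dimension at most s, with N ≤ (k·h·t/s)^{s·d}. Let A ∈ ℝ^{m×n} be a random matrix with i.i.d. N(0, 1/m) entries. If m ≥ C·(1/α²)·s·d·log(k·h·t/s), then with probability at least 1 − exp(−c·α²·m), A satisfies S-REC(⋃_{i=1}^N V_i, 1 − α, 0), i.e., ‖A(x₁ − x₂)‖₂ ≥ (1 − α)·‖x₁ − x₂‖₂ for all x₁, x₂ in ⋃_i V_i. -/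

import Mathlib

open MeasureTheory ProbabilityTheory

/-- The law of an `m × n` random matrix with i.i.d. `N(0, 1/m)` entries. -/
noncomputable def gaussMatrix (m n : ℕ) : Measure (Fin m → Fin n → ℝ) :=
  Measure.pi fun _ => Measure.pi fun _ => gaussianReal 0 ((m : NNReal))⁻¹

/-!
For a fixed vector `x`, the coordinates of `A x` are i.i.d. centred Gaussians of variance
`‖x‖² / m`, so `‖A x‖² - ‖x‖²` is a sum of independent sub-exponential variables and exceeds
`α ‖x‖²` in absolute value with probability at most `2 exp (-m α² / 16)`. On a subspace `W`,
`‖A x‖² - ‖x‖²` is the quadratic form of a symmetric operator, whose norm is at most twice its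
maximum over a `1/4`-net of the unit ball of `W`; such a net has at most `9 ^ dim W` points,
independently of `α`. Applying this to the spaces `W = V i + V j`, which contain all differences
of points of the union, costs a factor `N² 81 ^ s`, which is absorbed by the exponential as soon
as `m α²` dominates `s + log N`.
-/

open Real Set Metric Module
open scoped NNReal InnerProductSpace

section Subexponential

variable {Ω Ω' : Type*} [MeasurableSpace Ω] [MeasurableSpace Ω'] {μ : Measure Ω} {ν : Measure Ω'}
  {X : Ω → ℝ} {K b : ℝ≥0}

/-- `X` is sub-exponential with variance proxy `K` and scale `b`: the sub-Gaussian bound on the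
moment generating function holds for `|t| ≤ 1 / b` (for all `t` if `b = 0`). -/
structure HasSubexponentialMGF (X : Ω → ℝ) (K b : ℝ≥0) (μ : Measure Ω) : Prop where
  integrable_exp_mul : ∀ t : ℝ, b * |t| ≤ 1 → Integrable (fun ω ↦ exp (t * X ω)) μ
  mgf_le : ∀ t : ℝ, b * |t| ≤ 1 → mgf X μ t ≤ exp (K * t ^ 2 / 2)

namespace HasSubexponentialMGF

lemma neg (h : HasSubexponentialMGF X K b μ) : HasSubexponentialMGF (-X) K b μ where
  integrable_exp_mul t ht := by
    simpa using h.integrable_exp_mul (-t) (by simpa using ht)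
  mgf_le t ht := by
    simpa [mgf_neg] using h.mgf_le (-t) (by simpa using ht)

lemma comp_measurePreserving {f : Ω' → Ω} (h : HasSubexponentialMGF X K b μ)
    (hf : MeasurePreserving f ν μ) : HasSubexponentialMGF (X ∘ f) K b ν where
  integrable_exp_mul t ht := hf.integrable_comp_of_integrable (h.integrable_exp_mul t ht)
  mgf_le t ht := by
    have h_meas := (h.integrable_exp_mul t ht).aestronglyMeasurable
    rw [← mgf_map hf.aemeasurable (hf.map_eq ▸ h_meas), hf.map_eq]
    exact h.mgf_le t ht

lemma sum_of_iIndepFun {ι : Type*} [Fintype ι] {X : ι → Ω → ℝ} {K : ι → ℝ≥0}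
    (h_indep : iIndepFun X μ) (h_meas : ∀ i, Measurable (X i))
    (h : ∀ i, HasSubexponentialMGF (X i) (K i) b μ) :
    HasSubexponentialMGF (∑ i, X i) (∑ i, K i) b μ where
  integrable_exp_mul t ht := by
    have := h_indep.isProbabilityMeasure
    exact h_indep.integrable_exp_mul_sum h_meas fun i _ ↦ (h i).integrable_exp_mul t ht
  mgf_le t ht := calc
    mgf (∑ i, X i) μ t = ∏ i, mgf (X i) μ t := h_indep.mgf_sum h_meas _
    _ ≤ ∏ i, exp (K i * t ^ 2 / 2) :=
      Finset.prod_le_prod (fun _ _ ↦ mgf_nonneg) fun i _ ↦ (h i).mgf_le t ht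
    _ = exp (↑(∑ i, K i) * t ^ 2 / 2) := by
      rw [← exp_sum, NNReal.coe_sum, Finset.sum_mul, Finset.sum_div]

variable {a : ℝ}

lemma measureReal_ge_le [IsFiniteMeasure μ] (h : HasSubexponentialMGF X K b μ) (ha : 0 ≤ a)
    (hab : b * a ≤ K) : μ.real {ω | a ≤ X ω} ≤ exp (-a ^ 2 / (2 * K)) := by
  have ht : b * |a / K| ≤ 1 := by
    rw [abs_of_nonneg (by positivity), ← mul_div_assoc]
    exact div_le_one_of_le₀ hab K.2
  calc μ.real {ω | a ≤ X ω}
      ≤ exp (-(a / K) * a) * mgf X μ (a / K) :=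
        measure_ge_le_exp_mul_mgf a (by positivity) (h.integrable_exp_mul _ ht)
    _ ≤ exp (-(a / K) * a) * exp (K * (a / K) ^ 2 / 2) := by gcongr; exact h.mgf_le _ ht
    _ = exp (-a ^ 2 / (2 * K)) := by
      rw [← exp_add]
      congr 1
      rcases eq_or_ne (K : ℝ) 0 with hK | hK
      · simp [hK]
      · field_simp; ring

lemma measureReal_abs_ge_le [IsFiniteMeasure μ] (h : HasSubexponentialMGF X K b μ)
    (ha : 0 ≤ a) (hab : b * a ≤ K) :
    μ.real {ω | a ≤ |X ω|} ≤ 2 * exp (-a ^ 2 / (2 * K)) := calc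
  μ.real {ω | a ≤ |X ω|} = μ.real ({ω | a ≤ X ω} ∪ {ω | a ≤ (-X) ω}) := by
    simp only [le_abs, ofPred_or, Pi.neg_apply]
  _ ≤ μ.real {ω | a ≤ X ω} + μ.real {ω | a ≤ (-X) ω} := measureReal_union_le _ _
  _ ≤ 2 * exp (-a ^ 2 / (2 * K)) := by
    rw [two_mul]
    exact add_le_add (h.measureReal_ge_le ha hab) (h.neg.measureReal_ge_le ha hab)

end HasSubexponentialMGF

end Subexponential

section GaussianSquare

variable {v : ℝ≥0} {t : ℝ}

lemma gaussianPDFReal_zero_mul_exp_mul_sq (hv : v ≠ 0) (t x : ℝ) :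
    gaussianPDFReal 0 v x * exp (t * x ^ 2) =
      (√(2 * π * v))⁻¹ * exp (-((1 - 2 * t * v) / (2 * v)) * x ^ 2) := by
  rw [gaussianPDFReal_def, mul_assoc, ← exp_add]
  congr 2
  field_simp
  ring

lemma integrable_exp_mul_sq_gaussianReal (h : 2 * t * v < 1) :
    Integrable (fun x ↦ exp (t * x ^ 2)) (gaussianReal 0 v) := by
  rcases eq_or_ne v 0 with rfl | hv
  · simpa using integrable_dirac (by simp)
  · have h_pos : 0 < (1 - 2 * t * v) / (2 * v) := div_pos (by linarith) (by positivity)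
    rw [gaussianReal_of_var_ne_zero _ hv, gaussianPDF_def,
      integrable_withDensity_iff_integrable_smul₀' (by fun_prop) (by simp)]
    simp only [ENNReal.toReal_ofReal (gaussianPDFReal_nonneg _ _ _), smul_eq_mul,
      gaussianPDFReal_zero_mul_exp_mul_sq hv]
    exact (integrable_exp_neg_mul_sq h_pos).const_mul _

lemma integral_exp_mul_sq_gaussianReal (h : 2 * t * v < 1) :
    ∫ x, exp (t * x ^ 2) ∂gaussianReal 0 v = (√(1 - 2 * t * v))⁻¹ := by
  rcases eq_or_ne v 0 with rfl | hv
  · simp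
  · have : 0 < 1 - 2 * t * v := by linarith
    simp only [integral_gaussianReal_eq_integral_smul hv, smul_eq_mul,
      gaussianPDFReal_zero_mul_exp_mul_sq hv]
    rw [integral_const_mul, integral_gaussian, ← sqrt_inv, ← sqrt_mul (by positivity), ← sqrt_inv]
    congr 1
    field_simp

lemma neg_log_one_sub_le {u : ℝ} (hu : |u| ≤ 1 / 2) : -log (1 - u) ≤ u + 2 * u ^ 2 := by
  have h_taylor : |u + log (1 - u)| ≤ |u| ^ 2 / (1 - |u|) := by
    simpa using abs_log_sub_add_sum_range_le (show |u| < 1 by linarith) 1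
  have h_remainder : |u| ^ 2 / (1 - |u|) ≤ 2 * u ^ 2 := by
    rw [div_le_iff₀ (by linarith), sq_abs]
    nlinarith [sq_nonneg u]
  linarith [neg_le_abs (u + log (1 - u))]

lemma inv_sqrt_one_sub_le_exp {u : ℝ} (hu : |u| ≤ 1 / 2) :
    (√(1 - u))⁻¹ ≤ exp (u / 2 + u ^ 2) := by
  have h_pos : 0 < 1 - u := by linarith [le_abs_self u]
  rw [← exp_log (inv_pos.2 (sqrt_pos.2 h_pos)), log_inv, log_sqrt h_pos.le]
  gcongr
  linarith [neg_log_one_sub_le hu]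

lemma hasSubexponentialMGF_sq_sub_gaussianReal (v : ℝ≥0) :
    HasSubexponentialMGF (fun x ↦ x ^ 2 - v) (8 * v ^ 2) (4 * v) (gaussianReal 0 v) := by
  have exp_eq (t x : ℝ) : exp (t * (x ^ 2 - v)) = exp (-(t * v)) * exp (t * x ^ 2) := by
    rw [← exp_add]
    ring_nf
  have abs_le {t : ℝ} (ht : ↑(4 * v) * |t| ≤ 1) : |2 * t * v| ≤ 1 / 2 := by
    push_cast at ht
    rw [abs_mul, abs_mul, abs_two, NNReal.abs_eq]
    linarith
  have lt_one {t : ℝ} (ht : ↑(4 * v) * |t| ≤ 1) : 2 * t * v < 1 := by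
    linarith [le_abs_self (2 * t * v), abs_le ht]
  refine ⟨fun t ht ↦ ?_, fun t ht ↦ ?_⟩
  · simp only [exp_eq]
    exact (integrable_exp_mul_sq_gaussianReal (lt_one ht)).const_mul _
  · calc mgf (fun x ↦ x ^ 2 - v) (gaussianReal 0 v) t
        = exp (-(t * v)) * (√(1 - 2 * t * v))⁻¹ := by
          simp only [mgf, exp_eq, integral_const_mul,
            integral_exp_mul_sq_gaussianReal (lt_one ht)]
      _ ≤ exp (-(t * v)) * exp (2 * t * v / 2 + (2 * t * v) ^ 2) := by
          gcongr
          exact inv_sqrt_one_sub_le_exp (abs_le ht)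
      _ = exp (((8 * v ^ 2 : ℝ≥0) : ℝ) * t ^ 2 / 2) := by
          rw [← exp_add]
          push_cast
          ring_nf

end GaussianSquare

section GaussianMatrix

lemma map_sum_mul_pi_gaussianReal {ι : Type*} [Fintype ι] (v : ℝ≥0) (x : EuclideanSpace ℝ ι) :
    (Measure.pi fun _ : ι ↦ gaussianReal 0 v).map (fun a ↦ ∑ j, a j * x j) =
      gaussianReal 0 (v * ‖x‖₊ ^ 2) := by
  have h_meas : Measurable fun a : ι → ℝ ↦ ∑ j, a j * x j := by fun_prop
  refine Measure.ext_of_charFun (funext fun t ↦ ?_)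
  rw [charFun_apply_real, integral_map h_meas.aemeasurable (by fun_prop)]
  calc ∫ a, Complex.exp (t * ↑(∑ j, a j * x j) * Complex.I) ∂(Measure.pi fun _ ↦ gaussianReal 0 v)
      = ∫ a, ∏ j, Complex.exp (↑(t * x j) * a j * Complex.I)
          ∂(Measure.pi fun _ ↦ gaussianReal 0 v) := by
        congr! 2 with a
        rw [← Complex.exp_sum]
        push_cast
        rw [Finset.mul_sum, Finset.sum_mul]
        congr! 2 with j
        ring
    _ = ∏ j, charFun (gaussianReal 0 v) (t * x j) := by
        rw [integral_fintype_prod_eq_prod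
          (f := fun j (y : ℝ) ↦ Complex.exp (↑(t * x j) * y * Complex.I))]
        simp only [charFun_apply_real]
    _ = charFun (gaussianReal 0 (v * ‖x‖₊ ^ 2)) t := by
        have h_norm : ((‖x‖ ^ 2 : ℝ) : ℂ) = ∑ j, (x j : ℂ) ^ 2 := by
          simp [EuclideanSpace.real_norm_sq_eq]
        simp only [charFun_gaussianReal, ← Complex.exp_sum]
        congr 1
        push_cast at h_norm ⊢
        rw [h_norm, Finset.mul_sum, Finset.sum_mul, Finset.sum_div]
        simp only [mul_zero, zero_mul, zero_sub, Finset.sum_neg_distrib]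
        congr! 2 with j
        ring

variable {m n : ℕ}

instance : IsProbabilityMeasure (gaussMatrix m n) := by
  unfold gaussMatrix
  infer_instance

lemma measurePreserving_sum_mul_gaussMatrix (x : EuclideanSpace ℝ (Fin n)) :
    MeasurePreserving (fun A i ↦ ∑ j, A i j * x j) (gaussMatrix m n)
      (Measure.pi fun _ ↦ gaussianReal 0 ((m : ℝ≥0)⁻¹ * ‖x‖₊ ^ 2)) :=
  measurePreserving_pi _ _ fun _ ↦ ⟨by fun_prop, map_sum_mul_pi_gaussianReal _ x⟩

lemma hasSubexponentialMGF_sum_sq_sub_pi_gaussianReal (ι : Type*) [Fintype ι] (v : ℝ≥0) :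
    HasSubexponentialMGF (∑ i, fun y : ι → ℝ ↦ y i ^ 2 - v) (Fintype.card ι * (8 * v ^ 2)) (4 * v)
      (Measure.pi fun _ ↦ gaussianReal 0 v) := by
  have h_indep : iIndepFun (fun i (y : ι → ℝ) ↦ y i ^ 2 - v)
      (Measure.pi fun _ ↦ gaussianReal 0 v) :=
    iIndepFun_pi (X := fun _ (y : ℝ) ↦ y ^ 2 - (v : ℝ)) fun _ ↦ by fun_prop
  simpa using HasSubexponentialMGF.sum_of_iIndepFun h_indep (fun i ↦ by fun_prop) fun i ↦
    (hasSubexponentialMGF_sq_sub_gaussianReal v).comp_measurePreserving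
      (measurePreserving_eval (fun _ : ι ↦ gaussianReal 0 v) i)

lemma hasSubexponentialMGF_norm_sq_sub_gaussMatrix (hm : m ≠ 0) (x : EuclideanSpace ℝ (Fin n)) :
    HasSubexponentialMGF (fun A ↦ ‖Matrix.toEuclideanLin (Matrix.of A) x‖ ^ 2 - ‖x‖ ^ 2)
      (8 * ‖x‖₊ ^ 4 / m) (4 * ‖x‖₊ ^ 2 / m) (gaussMatrix m n) := by
  convert! (hasSubexponentialMGF_sum_sq_sub_pi_gaussianReal (Fin m)
    ((m : ℝ≥0)⁻¹ * ‖x‖₊ ^ 2)).comp_measurePreserving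
      (measurePreserving_sum_mul_gaussMatrix x) using 1
  · ext A
    simp [EuclideanSpace.real_norm_sq_eq (Matrix.toEuclideanLin _ _), Matrix.mulVec, dotProduct, hm]
  · rw [Fintype.card_fin]
    field_simp
  · field_simp

lemma gaussMatrix_real_lt_abs_norm_sq_sub_le {ε : ℝ} (hε : ε ∈ Icc 0 1)
    (x : EuclideanSpace ℝ (Fin n)) :
    (gaussMatrix m n).real
        {A | ε * ‖x‖ ^ 2 < |‖Matrix.toEuclideanLin (Matrix.of A) x‖ ^ 2 - ‖x‖ ^ 2|} ≤
      2 * exp (-(m * ε ^ 2 / 16)) := by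
  rcases eq_or_ne m 0 with rfl | hm
  · exact measureReal_le_one.trans (by simp)
  rcases eq_or_ne x 0 with rfl | hx
  · simp [exp_nonneg]
  have h_scale : ↑(4 * ‖x‖₊ ^ 2 / m : ℝ≥0) * (ε * ‖x‖ ^ 2) ≤ ↑(8 * ‖x‖₊ ^ 4 / m : ℝ≥0) := by
    push_cast
    rw [div_mul_eq_mul_div]
    refine div_le_div_of_nonneg_right ?_ (Nat.cast_nonneg m)
    nlinarith [hε.2, pow_nonneg (norm_nonneg x) 4]
  calc (gaussMatrix m n).real
        {A | ε * ‖x‖ ^ 2 < |‖Matrix.toEuclideanLin (Matrix.of A) x‖ ^ 2 - ‖x‖ ^ 2|}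
      ≤ (gaussMatrix m n).real
        {A | ε * ‖x‖ ^ 2 ≤ |‖Matrix.toEuclideanLin (Matrix.of A) x‖ ^ 2 - ‖x‖ ^ 2|} :=
        measureReal_mono fun A hA ↦ le_of_lt (mem_ofPred_eq ▸ hA)
    _ ≤ 2 * exp (-(ε * ‖x‖ ^ 2) ^ 2 / (2 * ↑(8 * ‖x‖₊ ^ 4 / m : ℝ≥0))) :=
        (hasSubexponentialMGF_norm_sq_sub_gaussMatrix hm x).measureReal_abs_ge_le
          (mul_nonneg hε.1 (by positivity)) h_scale
    _ = 2 * exp (-(m * ε ^ 2 / 16)) := by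
        congr 2
        push_cast
        have := norm_ne_zero_iff.2 hx
        field_simp
        ring

end GaussianMatrix

section Packing

lemma packingNumber_ne_top_of_isCompact {X : Type*} [PseudoEMetricSpace X] {ε : ℝ≥0} (hε : ε ≠ 0)
    {A : Set X} (hA : IsCompact A) : packingNumber ε A ≠ ⊤ := by
  obtain ⟨C, -, hC, h_cover⟩ := exists_finite_isCover_of_isCompact (half_pos hε.bot_lt).ne' hA
  rw [← mul_div_cancel₀ ε two_ne_zero]
  exact ((packingNumber_two_mul_le_externalCoveringNumber _ A).trans
    h_cover.externalCoveringNumber_le_encard).trans_lt hC.encard_lt_top |>.ne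

variable {E : Type*} [NormedAddCommGroup E] [NormedSpace ℝ E] [FiniteDimensional ℝ E] {ε : ℝ≥0}

lemma card_le_of_isSeparated_closedBall (hε : ε ≠ 0) {S : Finset E} (x : E) {R : ℝ}
    (hR : 0 ≤ R) (hS : (S : Set E) ⊆ closedBall x R) (h_sep : IsSeparated ε (S : Set E)) :
    (S.card : ℝ) ≤ (1 + 2 * R / ε) ^ finrank ℝ E := by
  borelize E
  let μ : Measure E := Measure.addHaar
  have hε' : (0 : ℝ) < ε := by positivity
  have real_ball (c : E) {r : ℝ} (hr : 0 < r) :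
      μ.real (ball c r) = r ^ finrank ℝ E * μ.real (ball 0 1) := by
    simp [Measure.real, μ.addHaar_ball_of_pos c hr, hr.le]
  have h_disj : (S : Set E).PairwiseDisjoint fun c ↦ ball c (ε / 2 : ℝ) := by
    intro c hc d hd hcd
    have hlt : (ε : ENNReal) < edist c d := h_sep hc hd hcd
    rw [edist_nndist, ENNReal.coe_lt_coe, ← NNReal.coe_lt_coe, coe_nndist] at hlt
    exact ball_disjoint_ball (by linarith)
  have h_subset : ⋃ c ∈ S, ball c (ε / 2 : ℝ) ⊆ ball x (R + ε / 2) :=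
    iUnion₂_subset fun c hc ↦ ball_subset_ball' (by linarith [mem_closedBall.1 (hS hc)])
  have h_volume : S.card * (ε / 2 : ℝ) ^ finrank ℝ E * μ.real (ball 0 1) ≤
      (R + ε / 2) ^ finrank ℝ E * μ.real (ball 0 1) := calc
    _ = μ.real (⋃ c ∈ S, ball c (ε / 2 : ℝ)) := by
      rw [measureReal_biUnion_finset h_disj fun _ _ ↦ measurableSet_ball]
      simp only [real_ball _ (half_pos hε'), Finset.sum_const, nsmul_eq_mul, mul_assoc]
    _ ≤ μ.real (ball x (R + ε / 2)) := measureReal_mono h_subset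
    _ = _ := real_ball x (by positivity)
  have h_unit : 0 < μ.real (ball (0 : E) 1) :=
    ENNReal.toReal_pos (measure_ball_pos μ 0 one_pos).ne' measure_ball_lt_top.ne
  calc (S.card : ℝ) ≤ (R + ε / 2) ^ finrank ℝ E / (ε / 2 : ℝ) ^ finrank ℝ E :=
        (le_div_iff₀ (by positivity)).2 (le_of_mul_le_mul_right h_volume h_unit)
    _ = (1 + 2 * R / ε) ^ finrank ℝ E := by
        rw [← div_pow]
        congr 1
        field_simp
        ring

lemma exists_finset_isCover_closedBall (hε : ε ≠ 0) (x : E) {R : ℝ} (hR : 0 ≤ R) :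
    ∃ S : Finset E, (S : Set E) ⊆ closedBall x R ∧ IsCover ε (closedBall x R) (S : Set E) ∧
      (S.card : ℝ) ≤ (1 + 2 * R / ε) ^ finrank ℝ E := by
  have h_top : packingNumber ε (closedBall x R) ≠ ⊤ :=
    packingNumber_ne_top_of_isCompact hε (isCompact_closedBall x R)
  have h_fin : (maximalSeparatedSet ε (closedBall x R)).Finite := by
    rw [← encard_ne_top_iff, encard_maximalSeparatedSet h_top]
    exact h_top
  refine ⟨h_fin.toFinset, ?_, ?_, card_le_of_isSeparated_closedBall hε x hR ?_ ?_⟩ <;>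
    rw [h_fin.coe_toFinset]
  exacts [maximalSeparatedSet_subset, isCover_maximalSeparatedSet h_top,
    maximalSeparatedSet_subset, isSeparated_maximalSeparatedSet]

end Packing

section QuadraticForm

variable {𝕜 E : Type*} [RCLike 𝕜] [NormedAddCommGroup E] [InnerProductSpace 𝕜 E] {S : Set E}
  {ε : ℝ≥0} {δ : ℝ}

lemma abs_reApplyInnerSelf_sub_le (T : E →L[𝕜] E) (x u : E) :
    |T.reApplyInnerSelf x - T.reApplyInnerSelf u| ≤ ‖T‖ * ‖x - u‖ * (‖x‖ + ‖u‖) := by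
  have h_split : T.reApplyInnerSelf x - T.reApplyInnerSelf u =
      RCLike.re (⟪T x, x - u⟫_𝕜 + ⟪T (x - u), u⟫_𝕜) := by
    simp [ContinuousLinearMap.reApplyInnerSelf_apply, inner_sub_left, inner_sub_right]
  calc _ ≤ ‖⟪T x, x - u⟫_𝕜‖ + ‖⟪T (x - u), u⟫_𝕜‖ :=
        h_split ▸ (RCLike.abs_re_le_norm _).trans (norm_add_le _ _)
    _ ≤ ‖T‖ * ‖x‖ * ‖x - u‖ + ‖T‖ * ‖x - u‖ * ‖u‖ := by
        gcongr <;> refine (norm_inner_le_norm _ _).trans ?_ <;> gcongr <;> exact T.le_opNorm _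
    _ = ‖T‖ * ‖x - u‖ * (‖x‖ + ‖u‖) := by ring

lemma norm_le_of_isCover_closedBall {T : E →L[𝕜] E} (hT : T.IsSymmetric)
    (hS : S ⊆ closedBall 0 1) (h_cover : IsCover ε (closedBall 0 1) S)
    (hδ : ∀ u ∈ S, |T.reApplyInnerSelf u| ≤ δ) : (1 - 2 * ε) * ‖T‖ ≤ δ := by
  have h_ball (x : E) (hx : ‖x‖ ≤ 1) : |T.reApplyInnerSelf x| ≤ δ + 2 * ε * ‖T‖ := by
    obtain ⟨u, hu, hxu⟩ := mem_iUnion₂.1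
      (h_cover.subset_iUnion_closedBall (mem_closedBall_zero_iff.2 hx))
    have hu_norm : ‖u‖ ≤ 1 := mem_closedBall_zero_iff.1 (hS hu)
    rw [mem_closedBall_iff_norm] at hxu
    calc |T.reApplyInnerSelf x|
        ≤ |T.reApplyInnerSelf u| + |T.reApplyInnerSelf x - T.reApplyInnerSelf u| := by
          simpa using abs_add_le (T.reApplyInnerSelf u)
            (T.reApplyInnerSelf x - T.reApplyInnerSelf u)
      _ ≤ δ + ‖T‖ * ε * (1 + 1) := by
          gcongr
          · exact hδ u hu
          · exact (abs_reApplyInnerSelf_sub_le T x u).trans (by gcongr)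
      _ = δ + 2 * ε * ‖T‖ := by ring
  have h_norm : ‖T‖ ≤ δ + 2 * ε * ‖T‖ := by
    conv_lhs => rw [T.norm_eq_iSup_rayleighQuotient hT]
    refine ciSup_le fun x ↦ ?_
    rcases eq_or_ne x 0 with rfl | hx
    · simpa using (abs_nonneg _).trans (h_ball 0 (by simp))
    · have h_unit : ‖(‖x‖⁻¹ : 𝕜) • x‖ = 1 := norm_smul_inv_norm hx
      rw [← T.rayleigh_smul x (c := (‖x‖⁻¹ : 𝕜)) (by simpa using hx),
        ContinuousLinearMap.rayleighQuotient, h_unit, one_pow, div_one]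
      exact h_ball _ h_unit.le
  linarith

lemma abs_norm_sq_sub_le_of_isCover_closedBall [CompleteSpace E] {F : Type*}
    [NormedAddCommGroup F] [InnerProductSpace 𝕜 F] [CompleteSpace F] {L : E →L[𝕜] F}
    (hS : S ⊆ closedBall 0 1) (h_cover : IsCover ε (closedBall 0 1) S)
    (hδ : ∀ u ∈ S, |‖L u‖ ^ 2 - ‖u‖ ^ 2| ≤ δ) (hε : 2 * ε ≤ 1) (x : E) :
    (1 - 2 * ε) * |‖L x‖ ^ 2 - ‖x‖ ^ 2| ≤ δ * ‖x‖ ^ 2 := by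
  set T : E →L[𝕜] E := L.adjoint ∘L L - 1
  have hT : T.IsSymmetric :=
    (L.isPositive_adjoint_comp_self.isSelfAdjoint.sub (.one _)).isSymmetric
  have h_form (y : E) : T.reApplyInnerSelf y = ‖L y‖ ^ 2 - ‖y‖ ^ 2 := by
    rw [L.apply_norm_sq_eq_inner_adjoint_left, ← inner_self_eq_norm_sq (𝕜 := 𝕜),
      ContinuousLinearMap.reApplyInnerSelf_apply, ← map_sub, ← inner_sub_left]
    rfl
  have h_norm : (1 - 2 * ε) * ‖T‖ ≤ δ :=
    norm_le_of_isCover_closedBall hT hS h_cover (by simpa only [h_form] using hδ)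
  calc (1 - 2 * ε) * |‖L x‖ ^ 2 - ‖x‖ ^ 2|
      ≤ (1 - 2 * ε) * (‖T‖ * ‖x‖ ^ 2) := by
        gcongr
        · exact sub_nonneg.2 (mod_cast hε)
        · simpa [h_form, mul_assoc, ← sq] using abs_reApplyInnerSelf_sub_le T x 0
    _ ≤ δ * ‖x‖ ^ 2 := by
        rw [← mul_assoc]
        gcongr

end QuadraticForm

section RestrictedEigenvalue

section Definitions

variable {E F : Type*} [NormedAddCommGroup E] [NormedSpace ℝ E] [NormedAddCommGroup F]
  [NormedSpace ℝ F] {L : E →ₗ[ℝ] F} {S : Set E} {α : ℝ}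

/-- The set-restricted eigenvalue condition S-REC(`S`, `γ`, `δ`) of a linear measurement map. -/
def SatisfiesSREC (L : E →ₗ[ℝ] F) (S : Set E) (γ δ : ℝ) : Prop :=
  ∀ x₁ ∈ S, ∀ x₂ ∈ S, γ * ‖x₁ - x₂‖ - δ ≤ ‖L (x₁ - x₂)‖

/-- `L` preserves squared norms on `S` up to the relative error `α`: the restricted isometry
property with constant `α`, with an arbitrary set in place of the sparse vectors. -/
def IsRestrictedIsometryOn (L : E →ₗ[ℝ] F) (S : Set E) (α : ℝ) : Prop :=
  ∀ x ∈ S, |‖L x‖ ^ 2 - ‖x‖ ^ 2| ≤ α * ‖x‖ ^ 2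

lemma IsRestrictedIsometryOn.mul_norm_le_norm (h : IsRestrictedIsometryOn L S α)
    (hα : α ∈ Icc 0 1) {x : E} (hx : x ∈ S) : (1 - α) * ‖x‖ ≤ ‖L x‖ := by
  have h_lower : (1 - α) * ‖x‖ ^ 2 ≤ ‖L x‖ ^ 2 := by linarith [neg_le_of_abs_le (h x hx)]
  refine le_of_sq_le_sq ?_ (norm_nonneg _)
  calc ((1 - α) * ‖x‖) ^ 2 = (1 - α) * ((1 - α) * ‖x‖ ^ 2) := by ring
    _ ≤ (1 - α) * ‖x‖ ^ 2 :=
        mul_le_of_le_one_left (mul_nonneg (sub_nonneg.2 hα.2) (sq_nonneg _)) (by linarith [hα.1])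
    _ ≤ ‖L x‖ ^ 2 := h_lower

lemma satisfiesSREC_iUnion {ι : Type*} {V : ι → Submodule ℝ E} (hα : α ∈ Icc 0 1)
    (h : ∀ i j, IsRestrictedIsometryOn L (V i ⊔ V j : Submodule ℝ E) α) :
    SatisfiesSREC L (⋃ i, (V i : Set E)) (1 - α) 0 := by
  intro x₁ hx₁ x₂ hx₂
  obtain ⟨i, hi⟩ := mem_iUnion.1 hx₁
  obtain ⟨j, hj⟩ := mem_iUnion.1 hx₂
  rw [sub_zero]
  exact (h i j).mul_norm_le_norm hα
    (sub_mem (Submodule.mem_sup_left hi) (Submodule.mem_sup_right hj))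

end Definitions

lemma isRestrictedIsometryOn_of_isCover {E F : Type*} [NormedAddCommGroup E]
    [InnerProductSpace ℝ E] [FiniteDimensional ℝ E] [NormedAddCommGroup F] [InnerProductSpace ℝ F]
    [CompleteSpace F] {L : E →ₗ[ℝ] F} {W : Submodule ℝ E} {S : Set W} {ε : ℝ≥0} {α : ℝ}
    (hS : S ⊆ closedBall 0 1) (h_cover : IsCover ε (closedBall 0 1) S) (hε : 2 * ε < 1)
    (hα : 0 ≤ α) (h : IsRestrictedIsometryOn L ((↑) '' S) ((1 - 2 * ε) * α)) :
    IsRestrictedIsometryOn L W α := by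
  intro x hx
  have hε' : 0 < 1 - 2 * (ε : ℝ) := sub_pos.2 (mod_cast hε)
  have h_net (u : W) (hu : u ∈ S) : |‖L u‖ ^ 2 - ‖u‖ ^ 2| ≤ (1 - 2 * ε) * α :=
    (h u (mem_image_of_mem _ hu)).trans <| mul_le_of_le_one_right (by positivity) <|
      pow_le_one₀ (norm_nonneg _) (mem_closedBall_zero_iff.1 (hS hu))
  have h_subspace := abs_norm_sq_sub_le_of_isCover_closedBall
    (L := L.toContinuousLinearMap ∘L W.subtypeL) hS h_cover h_net hε.le ⟨x, hx⟩
  rw [mul_assoc] at h_subspace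
  exact le_of_mul_le_mul_left h_subspace hε'

lemma measureReal_not_forall_mem_le {Ω ι : Type*} [MeasurableSpace Ω] {μ : Measure Ω}
    (S : Finset ι) (p : ι → Ω → Prop) :
    μ.real {ω | ¬ ∀ i ∈ S, p i ω} ≤ ∑ i ∈ S, μ.real {ω | ¬ p i ω} := by
  convert measureReal_biUnion_finset_le S fun i ↦ {ω | ¬ p i ω}
  ext ω
  simp

variable {m n : ℕ} {α : ℝ}

lemma gaussMatrix_real_not_isRestrictedIsometryOn_le (hα : α ∈ Icc 0 1)
    (W : Submodule ℝ (EuclideanSpace ℝ (Fin n))) :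
    (gaussMatrix m n).real
        {A | ¬ IsRestrictedIsometryOn (Matrix.toEuclideanLin (Matrix.of A)) W α} ≤
      9 ^ finrank ℝ W * (2 * exp (-(m * α ^ 2 / 64))) := by
  obtain ⟨S, hS_ball, hS_cover, hS_card⟩ :=
    exists_finset_isCover_closedBall (E := W) (ε := 1 / 4) (by norm_num) 0 zero_le_one
  calc (gaussMatrix m n).real
        {A | ¬ IsRestrictedIsometryOn (Matrix.toEuclideanLin (Matrix.of A)) W α}
      ≤ (gaussMatrix m n).real {A | ¬ ∀ u ∈ S,
          |‖Matrix.toEuclideanLin (Matrix.of A) u‖ ^ 2 - ‖(u : EuclideanSpace ℝ (Fin n))‖ ^ 2| ≤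
            α / 2 * ‖(u : EuclideanSpace ℝ (Fin n))‖ ^ 2} := by
        refine measureReal_mono fun A ↦ mt fun h_net ↦
          isRestrictedIsometryOn_of_isCover hS_ball hS_cover (by norm_num) hα.1 ?_
        rintro _ ⟨u, hu, rfl⟩
        exact (h_net u hu).trans_eq (by push_cast; ring)
    _ ≤ ∑ u ∈ S, 2 * exp (-(m * (α / 2) ^ 2 / 16)) := by
        refine (measureReal_not_forall_mem_le S _).trans (Finset.sum_le_sum fun u _ ↦ ?_)
        simp only [not_le]
        exact gaussMatrix_real_lt_abs_norm_sq_sub_le ⟨by linarith [hα.1], by linarith [hα.2]⟩ _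
    _ = S.card * (2 * exp (-(m * α ^ 2 / 64))) := by
        rw [Finset.sum_const, nsmul_eq_mul]
        ring_nf
    _ ≤ 9 ^ finrank ℝ W * (2 * exp (-(m * α ^ 2 / 64))) := by
        gcongr
        exact hS_card.trans_eq (by norm_num)

variable {ι : Type*} [Fintype ι] {V : ι → Submodule ℝ (EuclideanSpace ℝ (Fin n))} {s : ℕ}

lemma gaussMatrix_real_not_satisfiesSREC_iUnion_le (hα : α ∈ Icc 0 1)
    (hV : ∀ i, finrank ℝ (V i) ≤ s) :
    (gaussMatrix m n).real {A | ¬ SatisfiesSREC (Matrix.toEuclideanLin (Matrix.of A))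
        (⋃ i, (V i : Set (EuclideanSpace ℝ (Fin n)))) (1 - α) 0} ≤
      Fintype.card ι ^ 2 * (9 ^ (2 * s) * (2 * exp (-(m * α ^ 2 / 64)))) := by
  have h_finrank (p : ι × ι) : finrank ℝ ↥(V p.1 ⊔ V p.2) ≤ 2 * s := by
    linarith [Submodule.finrank_add_le_finrank_add_finrank (V p.1) (V p.2), hV p.1, hV p.2]
  calc (gaussMatrix m n).real {A | ¬ SatisfiesSREC (Matrix.toEuclideanLin (Matrix.of A))
        (⋃ i, (V i : Set (EuclideanSpace ℝ (Fin n)))) (1 - α) 0}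
      ≤ (gaussMatrix m n).real {A | ¬ ∀ p ∈ (Finset.univ : Finset (ι × ι)),
          IsRestrictedIsometryOn (Matrix.toEuclideanLin (Matrix.of A))
            (V p.1 ⊔ V p.2 : Submodule ℝ (EuclideanSpace ℝ (Fin n))) α} :=
        measureReal_mono fun A ↦ mt fun h ↦
          satisfiesSREC_iUnion hα fun i j ↦ h (i, j) (Finset.mem_univ _)
    _ ≤ ∑ _p : ι × ι, 9 ^ (2 * s) * (2 * exp (-(m * α ^ 2 / 64))) := by
        refine (measureReal_not_forall_mem_le _ _).trans (Finset.sum_le_sum fun p _ ↦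
          (gaussMatrix_real_not_isRestrictedIsometryOn_le hα _).trans ?_)
        gcongr
        · norm_num
        · exact h_finrank p
    _ = Fintype.card ι ^ 2 * (9 ^ (2 * s) * (2 * exp (-(m * α ^ 2 / 64)))) := by
        simp [sq]

lemma sq_mul_pow_mul_exp_neg_le {N : ℕ} {τ : ℝ} (hs : 1 ≤ s) (hτ : 1152 * (s + log N) ≤ τ) :
    (N : ℝ) ^ 2 * (9 ^ (2 * s) * (2 * exp (-(τ / 64)))) ≤ exp (-(τ / 128)) := by
  have hN : (N : ℝ) ≤ exp (log N) := le_exp_log _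
  have h_nine : (9 : ℝ) ≤ exp 4 := by
    linarith [quadratic_le_exp_of_nonneg (show (0 : ℝ) ≤ 4 by norm_num)]
  have h_two : (2 : ℝ) ≤ exp s := by
    have : (1 : ℝ) ≤ s := mod_cast hs
    linarith [add_one_le_exp (s : ℝ)]
  calc (N : ℝ) ^ 2 * (9 ^ (2 * s) * (2 * exp (-(τ / 64))))
      ≤ exp (log N) ^ 2 * (exp 4 ^ (2 * s) * (exp s * exp (-(τ / 64)))) := by gcongr
    _ = exp (2 * log N + 9 * s - τ / 64) := by
        simp only [← exp_nat_mul, ← exp_add]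
        push_cast
        ring_nf
    _ ≤ exp (-(τ / 128)) := by
        have := log_natCast_nonneg N
        gcongr
        linarith

lemma add_log_le_of_le_pow {N d : ℕ} {R : ℝ} (hR : 3 ≤ R) (hd : 1 ≤ d)
    (hN : N ≤ R ^ (s * d)) : s + log N ≤ 2 * (s * d * log R) := by
  have hR_log : 1 ≤ log R := by
    rw [le_log_iff_exp_le (by linarith)]
    linarith [exp_one_lt_d9]
  have h_dim : (s : ℝ) ≤ s * d * log R := by
    have hd' : (1 : ℝ) ≤ d := mod_cast hd
    rw [mul_assoc]
    exact le_mul_of_one_le_right (Nat.cast_nonneg s) (one_le_mul_of_one_le_of_one_le hd' hR_log)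
  have h_card : log N ≤ s * d * log R := by
    rcases N.eq_zero_or_pos with rfl | hN_pos
    · simpa using (Nat.cast_nonneg s).trans h_dim
    · simpa using log_le_log (mod_cast hN_pos) hN
  linarith

theorem gaussian_srec_generator_range_general (hα : α ∈ Ioo 0 1) (hs : 1 ≤ s)
    (hV : ∀ i, finrank ℝ (V i) ≤ s)
    (hm : 1152 * (1 / α ^ 2) * (s + log (Fintype.card ι)) ≤ m) :
    ENNReal.ofReal (1 - exp (-(1 / 128) * α ^ 2 * m)) ≤
      gaussMatrix m n {A | SatisfiesSREC (Matrix.toEuclideanLin (Matrix.of A))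
        (⋃ i, (V i : Set (EuclideanSpace ℝ (Fin n)))) (1 - α) 0} := by
  set G := {A : Fin m → Fin n → ℝ | SatisfiesSREC (Matrix.toEuclideanLin (Matrix.of A))
    (⋃ i, (V i : Set (EuclideanSpace ℝ (Fin n)))) (1 - α) 0}
  have h_compl : (gaussMatrix m n).real Gᶜ ≤ exp (-(1 / 128) * α ^ 2 * m) := by
    have hτ : 1152 * (s + log (Fintype.card ι)) ≤ m * α ^ 2 := by
      rwa [mul_one_div, div_mul_eq_mul_div, div_le_iff₀ (pow_pos hα.1 2)] at hm
    exact (gaussMatrix_real_not_satisfiesSREC_iUnion_le (Ioo_subset_Icc_self hα) hV).trans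
      ((sq_mul_pow_mul_exp_neg_le hs hτ).trans_eq (by ring_nf))
  have h_total : 1 ≤ (gaussMatrix m n).real G + (gaussMatrix m n).real Gᶜ := by
    simpa using measureReal_union_le (μ := gaussMatrix m n) G Gᶜ
  rw [← ofReal_measureReal]
  exact ENNReal.ofReal_le_ofReal (by linarith)

end RestrictedEigenvalue

/-- Lemma 4: for a union of at most `(kht/s)^{sd}` subspaces of dimension at most `s`,
a Gaussian matrix with `m ≳ (1/α²) s d log(kht/s)` rows satisfies
S-REC(⋃ᵢ Vᵢ, 1-α, 0) with probability at least `1 - exp(-c α² m)`. -/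
theorem gaussian_srec_generator_range :
    ∃ C c : ℝ, 0 < C ∧ 0 < c ∧
      ∀ (k h t d s : ℕ), 0 < k → 0 < h → 0 < t → 0 < d → 1 ≤ s → s ≤ k →
        3 * s ≤ k * h * t →
        ∀ (n N m : ℕ) (V : Fin N → Submodule ℝ (EuclideanSpace ℝ (Fin n))),
          (∀ i, Module.finrank ℝ (V i) ≤ s) →
          (N : ℝ) ≤ ((k * h * t : ℝ) / s) ^ (s * d) →
          ∀ α : ℝ, α ∈ Set.Ioo (0 : ℝ) 1 →
            (m : ℝ) ≥ C * (1 / α ^ 2) * s * d * Real.log ((k * h * t : ℝ) / s) →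
            ENNReal.ofReal (1 - Real.exp (-c * α ^ 2 * m)) ≤
              gaussMatrix m n {A |
                ∀ x₁ ∈ ⋃ i, (V i : Set (EuclideanSpace ℝ (Fin n))),
                  ∀ x₂ ∈ ⋃ i, (V i : Set (EuclideanSpace ℝ (Fin n))),
                    (1 - α) * ‖x₁ - x₂‖ ≤
                      ‖Matrix.toEuclideanLin (Matrix.of A) (x₁ - x₂)‖} := by
  refine ⟨2304, 1 / 128, by norm_num, by norm_num, ?_⟩
  intro k h t d s _ _ _ hd hs _ hkht n N m V hV hN α hα hm
  have hR : 3 ≤ (k * h * t : ℝ) / s := by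
    rw [le_div_iff₀ (mod_cast hs)]
    exact mod_cast hkht
  have hm' : 1152 * (1 / α ^ 2) * (s + Real.log (Fintype.card (Fin N))) ≤ (m : ℝ) := by
    rw [Fintype.card_fin]
    calc 1152 * (1 / α ^ 2) * (s + Real.log N)
        ≤ 1152 * (1 / α ^ 2) * (2 * (s * d * Real.log ((k * h * t : ℝ) / s))) := by
          gcongr
          exact add_log_le_of_le_pow hR hd hN
      _ ≤ (m : ℝ) := by linarith
  simpa only [SatisfiesSREC, sub_zero] using gaussian_srec_generator_range_general hα hs hV hm'
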